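/- (Marcinkiewicz–Zygmund inequality for multilinear operators, Carando–Mazzitelli–Ombrosi) Let (X_i,μ_i) for i=1,…,m and (Y,ν) be σ-finite measure spaces. Let either 0<p,q_1,…,q_m<r<2, or r=2 and 0<p,q_1,…,q_m<∞. Let S be an m-linear operator (linear in each variable) from L^{q_1}(μ_1)×⋯×L^{q_m}(μ_m) into measurable functions on Y which is bounded into L^{p,∞}(ν), i.e. ‖S(f_1,…,f_m)‖_{L^{p,∞}(ν)} ≤ ‖S‖_{weak} ∏_{i=1}^m ‖f_i‖_{L^{q_i}(μ_i)} for all f_i ∈ L^{q_i}(μ_i). Then there exists a constant C>0, depending only on p, q_1,…,q_m, r, m, such that for all countable families {f^i_{k_i}}_{k_i} ⊂ L^{q_i}(μ_i), i=1,…,m: ‖(Σ_{k_1,…,k_m} |S(f^1_{k_1},…,f^m_{k_m})|^r)^{1/r}‖_{L^{p,∞}(ν)} ≤ C ‖S‖_{weak} ∏_{i=1}^m ‖(Σ_{k_i} |f^i_{k_i}|^r)^{1/r}‖_{L^{q_i}(μ_i)}. -/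

import Mathlib

open MeasureTheory ENNReal Set

noncomputable section

/-- The weak `L^{p,∞}(ν)` quasinorm of an `ℝ≥0∞`-valued function. -/
def wnormAbs {Y : Type*} [MeasurableSpace Y] (ν : Measure Y) (g : Y → ℝ≥0∞) (p : ℝ) :
    ℝ≥0∞ :=
  ⨆ (t : ℝ) (_ : 0 < t), ENNReal.ofReal t * (ν {y | ENNReal.ofReal t < g y}) ^ (1 / p)

/-- The `L^q(μ)` quasinorm, `0 < q < ∞`. -/
def eLq {X : Type*} [MeasurableSpace X] (μ : Measure X) (f : X → ℝ) (q : ℝ) : ℝ≥0∞ :=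
  (∫⁻ x, ENNReal.ofReal (|f x| ^ q) ∂μ) ^ (1 / q)

/-- Membership in `L^q(μ)`, `0 < q < ∞`. -/
def MemLq {X : Type*} [MeasurableSpace X] (μ : Measure X) (f : X → ℝ) (q : ℝ) : Prop :=
  Measurable f ∧ eLq μ f q < ⊤

def sgnB (b : Bool) : ℝ := if b then 1 else -1

lemma sgnB_sq (b : Bool) : sgnB b * sgnB b = 1 := by cases b <;> simp [sgnB]

lemma exp_avg (N : ℕ) (b : Fin N → ℝ) :
    ((2:ℝ)^N)⁻¹ * ∑ ε : Fin N → Bool, Real.exp (∑ k, b k * sgnB (ε k)) ≤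
      Real.exp ((∑ k, b k ^ 2) / 2) := by
  have h1 : ∑ ε : Fin N → Bool, Real.exp (∑ k, b k * sgnB (ε k)) =
      ∏ k, ∑ s : Bool, Real.exp (b k * sgnB s) := by
    rw [Finset.prod_univ_sum, Fintype.piFinset_univ]
    exact Finset.sum_congr rfl fun ε _ => Real.exp_sum _ _
  have h2 : ((2:ℝ)^N)⁻¹ = ∏ _k : Fin N, (2:ℝ)⁻¹ := by simp
  rw [h1, h2, ← Finset.prod_mul_distrib, Finset.sum_div, Real.exp_sum]
  refine Finset.prod_le_prod (fun k _ => by positivity) fun k _ => ?_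
  have := Real.cosh_le_exp_half_sq (b k)
  rw [Real.cosh_eq] at this
  refine le_trans (le_of_eq ?_) this
  simp [sgnB]; ring

lemma abs_rpow_le (q : ℝ) (hq : 0 < q) (x : ℝ) :
    |x| ^ q ≤ q ^ q * (Real.exp x + Real.exp (-x)) := by
  have h1 : |x| ≤ q * Real.exp (|x| / q) := by
    have := Real.add_one_le_exp (|x| / q)
    have h2 : |x| = q * (|x| / q) := by field_simp
    calc |x| = q * (|x| / q) := h2
      _ ≤ _ := by gcongr; linarith
  calc |x| ^ q ≤ (q * Real.exp (|x| / q)) ^ q := by gcongr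
    _ = q ^ q * Real.exp |x| := by
      rw [Real.mul_rpow hq.le (Real.exp_pos _).le, ← Real.exp_mul]
      congr 2; field_simp
    _ ≤ _ := by
      gcongr
      rcases abs_cases x with ⟨h, _⟩ | ⟨h, _⟩ <;> rw [h]
      · linarith [Real.exp_pos (-x)]
      · linarith [Real.exp_pos x]

lemma kh1 (q : ℝ) (hq : 0 < q) (N : ℕ) (b : Fin N → ℝ) (hb : ∑ k, b k ^ 2 = 1) :
    ((2:ℝ)^N)⁻¹ * ∑ ε : Fin N → Bool, |∑ k, b k * sgnB (ε k)| ^ q ≤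
      q ^ q * (2 * Real.exp (1/2)) := by
  have e1 := exp_avg N b
  have e2 := exp_avg N (fun k => - b k)
  simp only [neg_sq, neg_mul, Finset.sum_neg_distrib] at e2
  rw [hb] at e1 e2
  calc _ ≤ ((2:ℝ)^N)⁻¹ * ∑ ε : Fin N → Bool, q ^ q * (Real.exp (∑ k, b k * sgnB (ε k)) +
        Real.exp (-(∑ k, b k * sgnB (ε k)))) := by
        gcongr with ε; exact abs_rpow_le q hq _
    _ = q ^ q * (((2:ℝ)^N)⁻¹ * ∑ ε : Fin N → Bool, Real.exp (∑ k, b k * sgnB (ε k)) +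
        ((2:ℝ)^N)⁻¹ * ∑ ε : Fin N → Bool, Real.exp (-(∑ k, b k * sgnB (ε k)))) := by
        rw [← Finset.mul_sum, Finset.sum_add_distrib]; ring
    _ ≤ _ := by gcongr; linarith

/-- Khintchine, upper bound. -/
lemma kh (q : ℝ) (hq : 0 < q) : ∃ C : ℝ, 0 < C ∧ ∀ (N : ℕ) (b : Fin N → ℝ),
    ((2:ℝ)^N)⁻¹ * ∑ ε : Fin N → Bool, |∑ k, b k * sgnB (ε k)| ^ q ≤
      C * (∑ k, b k ^ 2) ^ (q / 2) := by
  refine ⟨q ^ q * (2 * Real.exp (1/2)), by positivity, fun N b => ?_⟩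
  have h0 : 0 ≤ ∑ k, b k ^ 2 := Finset.sum_nonneg fun k _ => sq_nonneg _
  rcases h0.eq_or_lt with h | h
  · have hb : ∀ k, b k = 0 := fun k => by
      have := (Finset.sum_eq_zero_iff_of_nonneg (fun k _ => sq_nonneg (b k))).1 h.symm k
        (Finset.mem_univ _)
      simpa using this
    simp [hb, hq.ne', Real.zero_rpow]
  · set s := √(∑ k, b k ^ 2) with hs
    have hs0 : 0 < s := Real.sqrt_pos.2 h
    have hs2 : s ^ 2 = ∑ k, b k ^ 2 := Real.sq_sqrt h0
    have := kh1 q hq N (fun k => b k / s) (by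
      simp only [div_pow]; rw [← Finset.sum_div, ← hs2, div_self (by positivity)])
    have e : ∀ ε : Fin N → Bool, |∑ k, b k * sgnB (ε k)| ^ q =
        s ^ q * |∑ k, b k / s * sgnB (ε k)| ^ q := fun ε => by
      rw [← Real.mul_rpow hs0.le (abs_nonneg _)]
      congr 1
      rw [← abs_of_pos hs0, ← abs_mul, abs_of_pos hs0, Finset.mul_sum]
      congr 1
      exact Finset.sum_congr rfl fun k _ => by field_simp
    have e2 : (∑ k, b k ^ 2) ^ (q / 2) = s ^ q := by
      rw [← hs2, ← Real.rpow_natCast, ← Real.rpow_mul hs0.le]; congr 1; push_cast; ring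
    rw [e2]
    simp_rw [e]
    rw [← Finset.mul_sum]
    calc _ = s ^ q * (((2:ℝ)^N)⁻¹ * ∑ ε : Fin N → Bool, |∑ k, b k / s * sgnB (ε k)| ^ q) := by ring
      _ ≤ s ^ q * (q ^ q * (2 * Real.exp (1/2))) := by gcongr
      _ = _ := by ring

/-- flip one coordinate -/
def flipE {N : ℕ} (k : Fin N) : (Fin N → Bool) ≃ (Fin N → Bool) :=
  Function.Involutive.toPerm (fun ε => Function.update ε k (!(ε k))) (by
    intro ε; ext i; by_cases h : i = k
    · subst h; simp
    · simp [h])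

lemma sgn_flip_same {N : ℕ} (k : Fin N) (ε) : sgnB (flipE k ε k) = - sgnB (ε k) := by
  have : flipE k ε k = !(ε k) := by
    change Function.update ε k (!(ε k)) k = _
    simp
  rw [this]; cases ε k <;> simp [sgnB]

lemma sgn_flip_ne {N : ℕ} (k l : Fin N) (h : l ≠ k) (ε) : flipE k ε l = ε l := by
  change Function.update ε k (!(ε k)) l = _
  simp [h]

lemma sq_avg (N : ℕ) (b : Fin N → ℝ) :
    ((2:ℝ)^N)⁻¹ * ∑ ε : Fin N → Bool, (∑ k, b k * sgnB (ε k)) ^ 2 = ∑ k, b k ^ 2 := by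
  have key : ∀ k l : Fin N, ∑ ε : Fin N → Bool, (b k * sgnB (ε k)) * (b l * sgnB (ε l)) =
      if k = l then 2 ^ N * b k ^ 2 else 0 := by
    intro k l
    split_ifs with h
    · subst h
      have : ∀ ε : Fin N → Bool, (b k * sgnB (ε k)) * (b k * sgnB (ε k)) = b k ^ 2 := fun ε => by
        have := sgnB_sq (ε k)
        linear_combination b k ^ 2 * this
      simp [this]
    · have h1 := Equiv.sum_comp (flipE k) (fun ε => (b k * sgnB (ε k)) * (b l * sgnB (ε l)))
      simp only [sgn_flip_same, sgn_flip_ne k l (Ne.symm h)] at h1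
      have h2 : ∀ ε : Fin N → Bool, b k * -sgnB (ε k) * (b l * sgnB (ε l)) =
        - ((b k * sgnB (ε k)) * (b l * sgnB (ε l))) := fun ε => by ring
      simp only [h2, Finset.sum_neg_distrib] at h1
      linarith
  simp_rw [sq (∑ k, _), Finset.sum_mul_sum]
  rw [Finset.sum_comm]
  simp_rw [Finset.sum_comm (s := (Finset.univ : Finset (Fin N → Bool))), key]
  simp [← Finset.mul_sum]

/-- Flip argument: probability at least one half. -/
lemma flip_lower (r : ℝ) (hr : 0 < r) (N : ℕ) {J : Type} [Fintype J] (x : J → Fin N → ℝ)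
    (k0 : Fin N) (A : ℝ) (hA : A ≤ ∑ j, |x j k0| ^ r) :
    (1/2 : ℝ) ≤ ((2:ℝ)^N)⁻¹ * ∑ ε : Fin N → Bool,
      (if (1/2) * A ≤ ∑ j, |∑ k, x j k * sgnB (ε k)| ^ r then (1:ℝ) else 0) := by
  set φ : (Fin N → Bool) → ℝ := fun ε =>
    (if (1/2) * A ≤ ∑ j, |∑ k, x j k * sgnB (ε k)| ^ r then (1:ℝ) else 0) with hφ
  have h1 := Equiv.sum_comp (flipE k0) φ
  have h2 : ∀ ε, 1 ≤ φ ε + φ (flipE k0 ε) := by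
    intro ε
    by_contra hcon
    have hn : ¬ ((1/2) * A ≤ ∑ j, |∑ k, x j k * sgnB (ε k)| ^ r) := by
      intro h; apply hcon; simp only [hφ, if_pos h]; split_ifs <;> norm_num
    have hn' : ¬ ((1/2) * A ≤ ∑ j, |∑ k, x j k * sgnB (flipE k0 ε k)| ^ r) := by
      intro h; apply hcon; simp only [hφ, if_pos h]; split_ifs <;> norm_num
    push Not at hn hn'
    have h3 : ∑ j, |x j k0| ^ r ≤ ∑ j, (|∑ k, x j k * sgnB (ε k)| ^ r +
        |∑ k, x j k * sgnB (flipE k0 ε k)| ^ r) := by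
      gcongr with j
      have e : ∑ k, x j k * sgnB (ε k) - ∑ k, x j k * sgnB (flipE k0 ε k) =
          2 * (x j k0 * sgnB (ε k0)) := by
        rw [← Finset.sum_sub_distrib, Finset.sum_eq_single k0]
        · rw [sgn_flip_same]; ring
        · intro k _ hk; rw [sgn_flip_ne k0 k hk]; ring
        · simp
      have e3 : |sgnB (ε k0)| = 1 := by cases ε k0 <;> simp [sgnB]
      have e4 : 2 * |x j k0| ≤ |∑ k, x j k * sgnB (ε k)| + |∑ k, x j k * sgnB (flipE k0 ε k)| := by
        have := abs_sub (∑ k, x j k * sgnB (ε k)) (∑ k, x j k * sgnB (flipE k0 ε k))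
        rw [e, abs_mul, abs_mul, e3] at this
        simpa using this
      rcases le_total |x j k0| |∑ k, x j k * sgnB (ε k)| with h | h
      · have : |x j k0| ^ r ≤ |∑ k, x j k * sgnB (ε k)| ^ r := by gcongr
        have := Real.rpow_nonneg (abs_nonneg (∑ k, x j k * sgnB (flipE k0 ε k))) r
        linarith
      · have : |x j k0| ^ r ≤ |∑ k, x j k * sgnB (flipE k0 ε k)| ^ r := by
          refine Real.rpow_le_rpow (abs_nonneg _) ?_ hr.le
          linarith
        have := Real.rpow_nonneg (abs_nonneg (∑ k, x j k * sgnB (ε k))) r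
        linarith
    rw [Finset.sum_add_distrib] at h3
    linarith
  have h3 : ∑ _ε : Fin N → Bool, (1:ℝ) ≤ ∑ ε, (φ ε + φ (flipE k0 ε)) :=
    Finset.sum_le_sum fun ε _ => h2 ε
  rw [Finset.sum_add_distrib, h1] at h3
  simp at h3
  rw [inv_mul_eq_div, le_div_iff₀ (by positivity)]
  linarith

/-- Hilbert lower bound, Paley-Zygmund -/
lemma pz_lower : ∃ δ : ℝ, 0 < δ ∧ ∀ (N : ℕ) {J : Type} [Fintype J] (a : J → Fin N → ℝ),
    δ ≤ ((2:ℝ)^N)⁻¹ * ∑ ε : Fin N → Bool,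
      (if (1/2) * ∑ j, ∑ k, a j k ^ 2 ≤ ∑ j, (∑ k, a j k * sgnB (ε k)) ^ 2 then (1:ℝ) else 0) := by
  obtain ⟨C, hC, h4⟩ := kh 4 (by norm_num)
  refine ⟨min 1 (1 / (4 * C)), by positivity, ?_⟩
  intro N J _ a
  set E : ((Fin N → Bool) → ℝ) → ℝ := fun φ => ((2:ℝ)^N)⁻¹ * ∑ ε, φ ε with hE
  have Emono : ∀ φ ψ : (Fin N → Bool) → ℝ, (∀ ε, φ ε ≤ ψ ε) → E φ ≤ E ψ := by
    intro φ ψ h; simp only [hE]; gcongr with ε; exact h ε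
  set σ : J → ℝ := fun j => ∑ k, a j k ^ 2 with hσ
  have hσ0 : ∀ j, 0 ≤ σ j := fun j => Finset.sum_nonneg fun k _ => sq_nonneg _
  set X : J → (Fin N → Bool) → ℝ := fun j ε => ∑ k, a j k * sgnB (ε k) with hX
  have hX2 : ∀ j, E (fun ε => X j ε ^ 2) = σ j := fun j => sq_avg N (a j)
  have hX4 : ∀ j, E (fun ε => X j ε ^ 4) ≤ C * σ j ^ 2 := fun j => by
    have := h4 N (a j)
    norm_num at this
    simpa [hE, hX, hσ, Even.pow_abs (show Even 4 by decide)] using this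
  set M := ∑ j, σ j with hM
  set Q : (Fin N → Bool) → ℝ := fun ε => ∑ j, X j ε ^ 2 with hQ
  have hM0 : 0 ≤ M := Finset.sum_nonneg fun j _ => hσ0 j
  change min 1 (1 / (4 * C)) ≤ E (fun ε => if (1/2) * M ≤ Q ε then (1:ℝ) else 0)
  have hQ0 : ∀ ε, 0 ≤ Q ε := fun ε => Finset.sum_nonneg fun j _ => sq_nonneg _
  have Esum : ∀ f : J → (Fin N → Bool) → ℝ, E (fun ε => ∑ j, f j ε) = ∑ j, E (f j) := by
    intro f; simp only [hE]; rw [Finset.sum_comm, Finset.mul_sum]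
  have Emul : ∀ (c : ℝ) (f : (Fin N → Bool) → ℝ), E (fun ε => c * f ε) = c * E f := by
    intro c f; simp only [hE]; rw [← Finset.mul_sum]; ring
  have Eadd : ∀ (f g : (Fin N → Bool) → ℝ), E (fun ε => f ε + g ε) = E f + E g := by
    intro f g; simp only [hE]; rw [Finset.sum_add_distrib]; ring
  have Econst : ∀ c : ℝ, E (fun _ => c) = c := by
    intro c; simp [hE]
  rcases hM0.eq_or_lt with h0 | hpos
  · rw [← h0]
    have : E (fun ε => if (1/2) * (0:ℝ) ≤ Q ε then (1:ℝ) else 0) = 1 := by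
      simp only [mul_zero, hQ0, if_true]; exact Econst 1
    rw [this]; exact min_le_left _ _
  · refine (min_le_right _ _).trans ?_
    have EQ : E Q = M := by
      rw [hQ, Esum]; exact Finset.sum_congr rfl fun j _ => hX2 j
    have Xz : ∀ j, σ j = 0 → ∀ ε, X j ε = 0 := fun j hj ε => by
      have : ∀ k, a j k = 0 := fun k => by
        have := (Finset.sum_eq_zero_iff_of_nonneg (fun k _ => sq_nonneg (a j k))).1 hj k
          (Finset.mem_univ _)
        simpa using this
      simp [hX, this]
    have EQ2 : E (fun ε => Q ε ^ 2) ≤ C * M ^ 2 := by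
      calc E (fun ε => Q ε ^ 2) ≤ E (fun ε => M * ∑ j, (σ j)⁻¹ * X j ε ^ 4) := by
            apply Emono; intro ε
            refine Finset.sum_sq_le_sum_mul_sum_of_sq_le_mul _ (fun j _ => hσ0 j)
              (fun j _ => mul_nonneg (inv_nonneg.2 (hσ0 j)) (by positivity)) fun j _ => ?_
            by_cases hj : σ j = 0
            · simp [Xz j hj]
            · apply le_of_eq; field_simp
        _ = M * ∑ j, (σ j)⁻¹ * E (fun ε => X j ε ^ 4) := by
            rw [Emul, Esum]; simp_rw [Emul]
        _ ≤ M * ∑ j, C * σ j := by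
            refine mul_le_mul_of_nonneg_left (Finset.sum_le_sum fun j _ => ?_) hM0
            by_cases hj : σ j = 0
            · simp [hj]
            · calc (σ j)⁻¹ * E (fun ε => X j ε ^ 4) ≤ (σ j)⁻¹ * (C * σ j ^ 2) := by
                    exact mul_le_mul_of_nonneg_left (hX4 j) (inv_nonneg.2 (hσ0 j))
                _ = _ := by field_simp
        _ = _ := by rw [← Finset.mul_sum]; ring
    set p := E (fun ε => if (1/2) * M ≤ Q ε then (1:ℝ) else 0) with hp
    have hfin : M ≤ 1/2 * M + (1 / (4 * C * M) * E (fun ε => Q ε ^ 2) + C * M * p) := by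
      calc M = E Q := EQ.symm
        _ ≤ E (fun ε => 1/2 * M + (1 / (4 * C * M) * Q ε ^ 2 +
              C * M * (if (1/2) * M ≤ Q ε then (1:ℝ) else 0))) := by
            apply Emono; intro ε
            split_ifs with h
            · have : Q ε ≤ 1 / (4 * C * M) * Q ε ^ 2 + C * M := by
                have e : 1 / (4 * C * M) * Q ε ^ 2 + C * M - Q ε =
                    (Q ε - 2 * C * M) ^ 2 / (4 * C * M) := by field_simp; ring
                have : 0 ≤ (Q ε - 2 * C * M) ^ 2 / (4 * C * M) := by positivity
                linarith
              linarith
            · push Not at h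
              have : 0 ≤ 1 / (4 * C * M) * Q ε ^ 2 := by positivity
              linarith
        _ = _ := by rw [Eadd, Eadd, Econst, Emul, Emul (C * M)]
    have h5 : 1 / (4 * C * M) * E (fun ε => Q ε ^ 2) ≤ M / 4 := by
      calc _ ≤ 1 / (4 * C * M) * (C * M ^ 2) := by gcongr
        _ = M / 4 := by field_simp
    have h6 : M / 4 ≤ C * M * p := by linarith
    rw [div_le_iff₀ (by positivity)]
    have : M * 1 ≤ M * (p * (4 * C)) := by linarith
    exact le_of_mul_le_mul_left this hpos

/-- A family of discrete random vectors adapted to the exponents `r`, `q`. -/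
def RV (r q : ℝ) : Prop :=
  ∃ (C δ c : ℝ), 0 < C ∧ 0 < δ ∧ 0 < c ∧ ∀ N : ℕ, ∃ (Ω : Type) (_ : Countable Ω)
    (w : Ω → ℝ≥0∞) (g : Ω → Fin N → ℝ), (∑' ω, w ω ≤ 1) ∧
    (∀ b : Fin N → ℝ, ∑' ω, w ω * ENNReal.ofReal (|∑ k, b k * g ω k| ^ q) ≤
      ENNReal.ofReal (C * (∑ k, |b k| ^ r) ^ (q / r))) ∧
    (∀ (J : Type) [Fintype J] (a : J → Fin N → ℝ), ENNReal.ofReal δ ≤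
      ∑' ω, w ω * (if c * ∑ j, ∑ k, |a j k| ^ r ≤ ∑ j, |∑ k, a j k * g ω k| ^ r then 1 else 0))

lemma avg_toENN (N : ℕ) (φ : (Fin N → Bool) → ℝ) (h : ∀ ε, 0 ≤ φ ε) :
    ∑' ε, ENNReal.ofReal ((2:ℝ)^N)⁻¹ * ENNReal.ofReal (φ ε) =
      ENNReal.ofReal (((2:ℝ)^N)⁻¹ * ∑ ε, φ ε) := by
  rw [tsum_fintype, ← Finset.mul_sum, ENNReal.ofReal_mul (by positivity),
    ENNReal.ofReal_sum_of_nonneg fun ε _ => h ε]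

lemma ite_toENN (P : Prop) [Decidable P] :
    (if P then (1:ℝ≥0∞) else 0) = ENNReal.ofReal (if P then (1:ℝ) else 0) := by
  split_ifs <;> simp

lemma RV_two (q : ℝ) (hq : 0 < q) : RV 2 q := by
  obtain ⟨C, hC, h1⟩ := kh q hq
  obtain ⟨δ, hδ, h2⟩ := pz_lower
  refine ⟨C, δ, 1/2, hC, hδ, by norm_num, fun N => ⟨Fin N → Bool, inferInstance,
    fun _ => ENNReal.ofReal ((2:ℝ)^N)⁻¹, fun ε k => sgnB (ε k), ?_, ?_, ?_⟩⟩
  · have := avg_toENN N (fun _ => 1) (fun _ => by norm_num)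
    simp only [ENNReal.ofReal_one, mul_one] at this
    rw [this]; simp
  · intro b
    rw [avg_toENN N _ (fun ε => by positivity)]
    refine ENNReal.ofReal_le_ofReal ?_
    simpa using h1 N b
  · intro J _ a
    simp_rw [ite_toENN]
    rw [avg_toENN N _ (fun ε => by split_ifs <;> norm_num)]
    refine ENNReal.ofReal_le_ofReal ?_
    simpa using h2 N a

def geoM : Measure ℕ :=
  Measure.sum fun n => ENNReal.ofReal ((1/2:ℝ)^(n+1)) • Measure.dirac n

lemma lint_geo (φ : ℕ → ℝ≥0∞) :
    ∫⁻ n, φ n ∂geoM = ∑' n, ENNReal.ofReal ((1/2:ℝ)^(n+1)) * φ n := by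
  simp [geoM, lintegral_sum_measure, lintegral_smul_measure]

lemma geo_hasSum : HasSum (fun n : ℕ => (1/2:ℝ)^(n+1)) 1 := by
  have := hasSum_geometric_two.mul_left (1/2:ℝ)
  simp only [← pow_succ'] at this
  simpa using this

instance : IsProbabilityMeasure geoM := ⟨by
  have := lint_geo (fun _ => 1)
  simp only [lintegral_one, mul_one] at this
  rw [this, ← ENNReal.ofReal_tsum_of_nonneg (fun n => by positivity) geo_hasSum.summable,
    geo_hasSum.tsum_eq, ENNReal.ofReal_one]⟩

lemma geo_tail (α A : ℝ) (hα : 0 ≤ α) (hA : 0 < A) (hle : α ≤ A) :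
    geoM {n : ℕ | ¬ (A ≤ 2 ^ n * α)} ≤ ENNReal.ofReal (Real.exp (-(α / (2 * A)))) := by
  rcases hα.eq_or_lt with h | h
  · rw [← h]; simpa using prob_le_one
  have hx : 1 ≤ A / α := by rwa [le_div_iff₀ h, one_mul]
  obtain ⟨n0, h1, h2⟩ := exists_nat_pow_near hx (by norm_num : (1:ℝ) < 2)
  have hsub : {n : ℕ | ¬ (A ≤ 2 ^ n * α)} ⊆ {n | n < n0 + 1} := by
    intro n hn
    simp only [mem_ofPred_eq, not_le] at hn ⊢
    by_contra hcon
    push Not at hcon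
    have : (2:ℝ) ^ (n0+1) ≤ 2 ^ n := by gcongr; norm_num
    rw [← lt_div_iff₀ h] at hn
    linarith
  have hsum : ∀ M : ℕ, ∑ n ∈ Finset.range M, (1/2:ℝ)^(n+1) = 1 - (1/2)^M := by
    intro M
    induction M with
    | zero => simp
    | succ M ih => rw [Finset.sum_range_succ, ih]; ring
  have hm : geoM {n | n < n0 + 1} = ENNReal.ofReal (1 - (1/2)^(n0+1)) := by
    rw [← lintegral_indicator_one (MeasurableSet.of_discrete), lint_geo,
      tsum_eq_sum (s := Finset.range (n0+1)), ← hsum,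
      ENNReal.ofReal_sum_of_nonneg (fun n _ => by positivity)]
    · refine Finset.sum_congr rfl fun n hn => ?_
      have : n ∈ {n | n < n0 + 1} := by simpa using hn
      rw [indicator_of_mem this]; simp
    · intro n hn
      have : n ∉ {n | n < n0 + 1} := by simpa using hn
      rw [indicator_of_notMem this]; simp
  refine (measure_mono hsub).trans ?_
  rw [hm]
  refine ENNReal.ofReal_le_ofReal ?_
  have e1 := Real.add_one_le_exp (-(α / (2 * A)))
  have e2 : α / (2 * A) ≤ (1/2)^(n0+1) := by
    rw [le_div_iff₀ h] at h1
    rw [div_le_iff₀ (by positivity), pow_succ, one_div, inv_pow]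
    have : 0 < (2:ℝ)^n0 := by positivity
    field_simp
    linarith
  linarith

lemma rpow_psi {ι : Type} (s : Finset ι) (y : ι → ℝ) (q : ℝ) (hq : 0 < q) (hq2 : q < 2) :
    (1 + ∑ k ∈ s, y k ^ 2) ^ (q/2) ≤ 1 + ∑ k ∈ s, min (y k ^ 2) (|y k| ^ q) := by
  classical
  induction s using Finset.induction_on with
  | empty => simp
  | insert a s ha ih =>
    rw [Finset.sum_insert ha, Finset.sum_insert ha]
    set A := 1 + ∑ k ∈ s, y k ^ 2 with hA
    have hA1 : 1 ≤ A := by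
      have : 0 ≤ ∑ k ∈ s, y k ^ 2 := Finset.sum_nonneg fun k _ => sq_nonneg _
      linarith
    have e : 1 + (y a ^ 2 + ∑ k ∈ s, y k ^ 2) = A + y a ^ 2 := by rw [hA]; ring
    rw [e]
    suffices h : (A + y a ^ 2) ^ (q/2) ≤ A ^ (q/2) + min (y a ^ 2) (|y a| ^ q) by linarith
    rw [← min_add_add_left]
    refine le_min ?_ ?_
    · have h1 : A + y a ^ 2 = A * (1 + y a ^ 2 / A) := by field_simp
      have h2 := rpow_one_add_le_one_add_mul_self (s := y a ^ 2 / A) (p := q/2)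
        (by have : 0 ≤ y a ^ 2 / A := by positivity
            linarith) (by linarith) (by linarith)
      rw [h1, Real.mul_rpow (by linarith) (by positivity)]
      have h3 : A ^ (q/2) ≤ A := by
        calc A ^ (q/2) ≤ A ^ (1:ℝ) := Real.rpow_le_rpow_of_exponent_le hA1 (by linarith)
          _ = A := Real.rpow_one A
      calc A ^ (q/2) * (1 + y a ^ 2 / A) ^ (q/2) ≤ A ^ (q/2) * (1 + q/2 * (y a ^ 2 / A)) := by
            gcongr
        _ = A ^ (q/2) + (A ^ (q/2) / A) * (q/2 * y a ^ 2) := by ring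
        _ ≤ A ^ (q/2) + 1 * (1 * y a ^ 2) := by
            gcongr
            · rw [div_le_one (by linarith)]; exact h3
            · linarith
        _ = _ := by ring
    · have := Real.rpow_add_le_add_rpow (a := A) (b := y a ^ 2) (p := q/2) (by linarith)
        (sq_nonneg _) (by linarith) (by linarith)
      refine this.trans (le_of_eq ?_)
      congr 1
      rw [← sq_abs, ← Real.rpow_natCast, ← Real.rpow_mul (abs_nonneg _)]
      congr 1; push_cast; ring

lemma tele (ρ z : ℝ) (hρ : 1 < ρ) (hz : 0 < z) :
    min z z⁻¹ ≤ 2 * (1 + ρ) / (ρ - 1) * (ρ * z / (1 + ρ * z) - z / (1 + z)) := by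
  have h1 : 0 < ρ - 1 := by linarith
  have e : 2 * (1 + ρ) / (ρ - 1) * (ρ * z / (1 + ρ * z) - z / (1 + z)) =
      2 * (1 + ρ) * z / ((1 + ρ * z) * (1 + z)) := by
    have : 1 + ρ * z ≠ 0 := by positivity
    have : 1 + z ≠ 0 := by positivity
    field_simp; ring
  rw [e]
  rcases le_total z 1 with h | h
  · refine (min_le_left _ _).trans ?_
    rw [le_div_iff₀ (by positivity)]
    have a1 : 1 + ρ * z ≤ 1 + ρ := by nlinarith
    have : (1 + ρ * z) * (1 + z) ≤ (1 + ρ) * 2 := by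
      apply mul_le_mul a1 (by linarith) (by positivity) (by positivity)
    nlinarith
  · refine (min_le_right _ _).trans ?_
    rw [le_div_iff₀ (by positivity), inv_mul_le_iff₀ hz]
    have a1 : 1 + ρ * z ≤ (1 + ρ) * z := by nlinarith
    have : (1 + ρ * z) * (1 + z) ≤ ((1 + ρ) * z) * (2 * z) := by
      apply mul_le_mul a1 (by linarith) (by positivity) (by positivity)
    nlinarith

def uR (r : ℝ) (n : ℕ) : ℝ := (2:ℝ) ^ ((n:ℝ) / r)

lemma uR_pos (r : ℝ) (n : ℕ) : 0 < uR r n := by unfold uR; positivity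

lemma uR_rpow (r : ℝ) (hr : 0 < r) (n : ℕ) : uR r n ^ r = 2 ^ n := by
  unfold uR
  rw [← Real.rpow_mul (by norm_num), div_mul_cancel₀ _ hr.ne', Real.rpow_natCast]

lemma psi_sum (r q : ℝ) (hq : 0 < q) (hqr : q < r) (hr2 : r < 2) : ∃ D : ℝ, 0 < D ∧
    ∀ b : ℝ, ∫⁻ n, ENNReal.ofReal (min ((b * uR r n) ^ 2) (|b * uR r n| ^ q)) ∂geoM ≤
      ENNReal.ofReal (D * |b| ^ r) := by
  have hr : 0 < r := hq.trans hqr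
  set η := min (2 - r) (r - q) with hη
  have hη0 : 0 < η := lt_min (by linarith) (by linarith)
  set ρ : ℝ := 2 ^ (η / r) with hρ
  have hρ1 : 1 < ρ := Real.one_lt_rpow (by norm_num) (by positivity)
  have hρ' : 0 < ρ - 1 := by linarith
  refine ⟨2 * (1 + ρ) / (ρ - 1), by positivity, fun b => ?_⟩
  rw [lint_geo]
  rcases eq_or_ne b 0 with rfl | hb
  · simp [Real.zero_rpow hq.ne', Real.zero_rpow hr.ne']
  have hβ : 0 < |b| := abs_pos.2 hb
  set x : ℕ → ℝ := fun n => |b| * uR r n with hx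
  have hx0 : ∀ n, 0 < x n := fun n => mul_pos hβ (uR_pos r n)
  set z : ℕ → ℝ := fun n => x n ^ η with hz
  have hz0 : ∀ n, 0 < z n := fun n => Real.rpow_pos_of_pos (hx0 n) _
  have hzs : ∀ n, z (n+1) = ρ * z n := fun n => by
    have : x (n+1) = 2 ^ (1/r) * x n := by
      simp only [hx, uR]; push_cast
      rw [add_div, Real.rpow_add (by norm_num)]; ring
    simp only [hz]
    rw [this, Real.mul_rpow (by positivity) (hx0 n).le, ← Real.rpow_mul (by norm_num)]
    congr 2; ring
  set Φ : ℕ → ℝ := fun n => z n / (1 + z n) with hΦ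
  have hterm : ∀ n : ℕ, (1/2:ℝ)^(n+1) * min ((b * uR r n) ^ 2) (|b * uR r n| ^ q) ≤
      |b| ^ r * (2 * (1 + ρ) / (ρ - 1) * (Φ (n+1) - Φ n)) := by
    intro n
    have e1 : |b * uR r n| = x n := by rw [abs_mul, abs_of_pos (uR_pos r n)]
    have e2 : (b * uR r n) ^ 2 = x n ^ (2:ℝ) := by rw [← sq_abs, e1]; norm_cast
    have e3 : (1/2:ℝ)^(n+1) ≤ |b| ^ r * (x n) ^ (-r) := by
      have : x n ^ r = |b| ^ r * 2 ^ n := by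
        simp only [hx]; rw [Real.mul_rpow hβ.le (uR_pos r n).le, uR_rpow r hr]
      rw [Real.rpow_neg (hx0 n).le, this]
      have h5 : 0 < |b| ^ r := by positivity
      rw [mul_inv, mul_inv_cancel_left₀ h5.ne', one_div, inv_pow]
      gcongr
      · norm_num
      · omega
    rw [e1, e2]
    have hmin : 0 ≤ min (x n ^ (2:ℝ)) (x n ^ q) :=
      le_min (Real.rpow_nonneg (hx0 n).le _) (Real.rpow_nonneg (hx0 n).le _)
    calc _ ≤ (|b| ^ r * (x n) ^ (-r)) * min (x n ^ (2:ℝ)) (x n ^ q) := by gcongr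
      _ = |b| ^ r * min (x n ^ (2 - r)) (x n ^ (q - r)) := by
        rw [mul_assoc, mul_min_of_nonneg _ _ (Real.rpow_nonneg (hx0 n).le _),
          ← Real.rpow_add (hx0 n), ← Real.rpow_add (hx0 n)]
        congr 3 <;> ring
      _ ≤ |b| ^ r * min (z n) (z n)⁻¹ := by
        gcongr ?_ * ?_
        have hzi : (z n)⁻¹ = x n ^ (-η) := by rw [Real.rpow_neg (hx0 n).le]
        rw [hzi]
        rcases le_total (x n) 1 with h | h
        · have i1 : x n ^ (2 - r) ≤ x n ^ η :=
            Real.rpow_le_rpow_of_exponent_ge (hx0 n) h (min_le_left _ _)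
          have i2 : x n ^ η ≤ x n ^ (-η) :=
            Real.rpow_le_rpow_of_exponent_ge (hx0 n) h (by linarith)
          exact (min_le_left _ _).trans (le_min i1 (i1.trans i2))
        · have i1 : x n ^ (q - r) ≤ x n ^ (-η) :=
            Real.rpow_le_rpow_of_exponent_le h (by linarith [min_le_right (2-r) (r-q)])
          have i2 : x n ^ (-η) ≤ x n ^ η :=
            Real.rpow_le_rpow_of_exponent_le h (by linarith)
          exact (min_le_right _ _).trans (le_min (i1.trans i2) i1)
      _ ≤ _ := by
        gcongr ?_ * ?_
        have := tele ρ (z n) hρ1 (hz0 n)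
        simp only [hΦ, hzs]; exact this
  have hn0 : ∀ n : ℕ, 0 ≤ (1/2:ℝ)^(n+1) * min ((b * uR r n) ^ 2) (|b * uR r n| ^ q) := fun n =>
    mul_nonneg (by positivity) (le_min (by positivity) (by positivity))
  refine ENNReal.tsum_le_of_sum_range_le fun M => ?_
  have : ∀ n : ℕ, ENNReal.ofReal ((1/2:ℝ)^(n+1)) *
      ENNReal.ofReal (min ((b * uR r n) ^ 2) (|b * uR r n| ^ q)) =
      ENNReal.ofReal ((1/2:ℝ)^(n+1) * min ((b * uR r n) ^ 2) (|b * uR r n| ^ q)) := fun n => by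
    rw [ENNReal.ofReal_mul (by positivity)]
  simp_rw [this]
  rw [← ENNReal.ofReal_sum_of_nonneg fun n _ => hn0 n]
  refine ENNReal.ofReal_le_ofReal ?_
  calc _ ≤ ∑ n ∈ Finset.range M, |b| ^ r * (2 * (1 + ρ) / (ρ - 1) * (Φ (n+1) - Φ n)) :=
        Finset.sum_le_sum fun n _ => hterm n
    _ = |b| ^ r * (2 * (1 + ρ) / (ρ - 1) * (Φ M - Φ 0)) := by
        rw [← Finset.mul_sum, ← Finset.mul_sum, Finset.sum_range_sub]
    _ ≤ |b| ^ r * (2 * (1 + ρ) / (ρ - 1) * 1) := by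
        gcongr
        have h1 : Φ M ≤ 1 := by
          simp only [hΦ]; rw [div_le_one (by linarith [hz0 M])]; linarith
        have h2 : 0 ≤ Φ 0 := div_nonneg (hz0 0).le (by linarith [hz0 0])
        linarith
    _ = _ := by ring

lemma RV_lt (r q : ℝ) (hq : 0 < q) (hqr : q < r) (hr2 : r < 2) : RV r q := by
  have hr : 0 < r := hq.trans hqr
  obtain ⟨C, hC, h1⟩ := kh q hq
  obtain ⟨D, hD, h2⟩ := psi_sum r q hq hqr hr2
  have hexp : Real.exp (-(1/2)) < 1 := by rw [Real.exp_lt_one_iff]; norm_num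
  refine ⟨C * (1 + D), (1/2) * (1 - Real.exp (-(1/2))), 1/2, by positivity, by linarith,
    by norm_num, fun N => ?_⟩
  set P : Measure (Fin N → ℕ) := Measure.pi fun _ => geoM with hP
  have hIn1 : ∀ φ : (Fin N → ℕ) → ℝ≥0∞, ∑' n, P {n} * φ n = ∫⁻ n, φ n ∂P := fun φ => by
    rw [lintegral_countable']; exact tsum_congr fun n => mul_comm _ _
  have hIn2 : ∀ φ : (Fin N → ℕ) → (Fin N → Bool) → ℝ, (∀ n ε, 0 ≤ φ n ε) →
      ∑' ω : (Fin N → ℕ) × (Fin N → Bool),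
        (P {ω.1} * ENNReal.ofReal ((2:ℝ)^N)⁻¹) * ENNReal.ofReal (φ ω.1 ω.2) =
      ∫⁻ n, ENNReal.ofReal (((2:ℝ)^N)⁻¹ * ∑ ε, φ n ε) ∂P := fun φ h0 => by
    rw [← hIn1, ENNReal.tsum_prod']
    refine tsum_congr fun n => ?_
    simp only [mul_assoc]
    rw [ENNReal.tsum_mul_left, avg_toENN N _ (h0 n)]
  refine ⟨(Fin N → ℕ) × (Fin N → Bool), inferInstance,
    fun ω => P {ω.1} * ENNReal.ofReal ((2:ℝ)^N)⁻¹, fun ω k => uR r (ω.1 k) * sgnB (ω.2 k),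
    ?_, ?_, ?_⟩
  · have := hIn2 (fun _ _ => 1) (fun _ _ => by norm_num)
    simp only [ENNReal.ofReal_one, mul_one] at this
    rw [this]; simp
  · -- upper bound
    -- normalized version
    have norm1 : ∀ b : Fin N → ℝ, ∑ k, |b k| ^ r ≤ 1 →
        ∑' ω : (Fin N → ℕ) × (Fin N → Bool), P {ω.1} * ENNReal.ofReal ((2:ℝ)^N)⁻¹ *
          ENNReal.ofReal (|∑ k, b k * (uR r (ω.1 k) * sgnB (ω.2 k))| ^ q) ≤
        ENNReal.ofReal (C * (1 + D)) := by
      intro b hb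
      rw [hIn2 (fun n ε => |∑ k, b k * (uR r (n k) * sgnB (ε k))| ^ q)
        (fun n ε => by positivity)]
      have hpt : ∀ n : Fin N → ℕ,
          ENNReal.ofReal (((2:ℝ)^N)⁻¹ *
            ∑ ε : Fin N → Bool, |∑ k, b k * (uR r (n k) * sgnB (ε k))| ^ q) ≤
          ENNReal.ofReal C * (1 + ∑ k, ENNReal.ofReal
            (min ((b k * uR r (n k)) ^ 2) (|b k * uR r (n k)| ^ q))) := by
        intro n
        have hmin : ∀ k, 0 ≤ min ((b k * uR r (n k)) ^ 2) (|b k * uR r (n k)| ^ q) :=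
          fun k => le_min (by positivity) (by positivity)
        rw [← ENNReal.ofReal_sum_of_nonneg fun k _ => hmin k, ← ENNReal.ofReal_one,
          ← ENNReal.ofReal_add zero_le_one (Finset.sum_nonneg fun k _ => hmin k),
          ← ENNReal.ofReal_mul hC.le]
        refine ENNReal.ofReal_le_ofReal ?_
        have e1 := h1 N (fun k => b k * uR r (n k))
        simp only [mul_assoc] at e1 ⊢
        refine e1.trans ?_
        gcongr
        have e2 := rpow_psi Finset.univ (fun k => b k * uR r (n k)) q hq (hqr.trans hr2)
        refine le_trans ?_ e2
        gcongr
        linarith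
      refine (lintegral_mono hpt).trans ?_
      rw [lintegral_const_mul _ (Measurable.of_discrete),
        lintegral_add_left measurable_const, lintegral_finsetSum _ (fun k _ => Measurable.of_discrete)]
      have hk : ∀ k, ∫⁻ n : Fin N → ℕ, ENNReal.ofReal
            (min ((b k * uR r (n k)) ^ 2) (|b k * uR r (n k)| ^ q)) ∂P ≤
          ENNReal.ofReal (D * |b k| ^ r) := fun k => by
        refine le_trans (le_of_eq ?_) (h2 (b k))
        exact (measurePreserving_eval (fun _ : Fin N => geoM) k).lintegral_comp
          (f := fun j => ENNReal.ofReal (min ((b k * uR r j) ^ 2) (|b k * uR r j| ^ q)))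
          Measurable.of_discrete
      calc _ ≤ ENNReal.ofReal C * (1 + ∑ k, ENNReal.ofReal (D * |b k| ^ r)) := by
            gcongr with k
            · simp
            · exact hk k
        _ = ENNReal.ofReal (C * (1 + D * ∑ k, |b k| ^ r)) := by
            rw [← ENNReal.ofReal_sum_of_nonneg fun k _ => by positivity, ← ENNReal.ofReal_one,
              ← ENNReal.ofReal_add zero_le_one (Finset.sum_nonneg fun k _ => by positivity),
              ← ENNReal.ofReal_mul hC.le, Finset.mul_sum]
        _ ≤ _ := by
            refine ENNReal.ofReal_le_ofReal ?_
            gcongr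
            nlinarith
    intro b
    have h0 : 0 ≤ ∑ k, |b k| ^ r := Finset.sum_nonneg fun k _ => by positivity
    rcases h0.eq_or_lt with h | h
    · have hb : ∀ k, b k = 0 := fun k => by
        have := (Finset.sum_eq_zero_iff_of_nonneg
          (fun k _ => Real.rpow_nonneg (abs_nonneg (b k)) r)).1 h.symm k (Finset.mem_univ _)
        rw [Real.rpow_eq_zero (abs_nonneg _) hr.ne'] at this
        simpa using this
      simp [hb, Real.zero_rpow hq.ne']
    · set s : ℝ := (∑ k, |b k| ^ r) ^ (1/r) with hs
      have hs0 : 0 < s := by positivity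
      have hsr : s ^ r = ∑ k, |b k| ^ r := by
        rw [hs, ← Real.rpow_mul h0, one_div_mul_cancel hr.ne', Real.rpow_one]
      have hsq : s ^ q = (∑ k, |b k| ^ r) ^ (q / r) := by
        rw [hs, ← Real.rpow_mul h0]; congr 1; ring
      have := norm1 (fun k => b k / s) (by
        simp only [abs_div, abs_of_pos hs0, Real.div_rpow (abs_nonneg _) hs0.le]
        rw [← Finset.sum_div, hsr, div_self h.ne'])
      rw [← hsq, mul_comm (C * (1 + D)), ENNReal.ofReal_mul (by positivity)]
      refine le_trans (le_of_eq ?_) (mul_le_mul_right this _)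
      rw [← ENNReal.tsum_mul_left]
      refine tsum_congr fun ω => ?_
      rw [mul_left_comm, ← ENNReal.ofReal_mul (by positivity), ← Real.mul_rpow hs0.le (abs_nonneg _)]
      congr 3
      rw [← abs_of_pos hs0, ← abs_mul, abs_of_pos hs0, Finset.mul_sum]
      congr 1
      exact Finset.sum_congr rfl fun k _ => by field_simp
  · intro J _ a
    simp_rw [ite_toENN]
    rw [hIn2 (fun n ε => if 1 / 2 * ∑ j, ∑ k, |a j k| ^ r ≤
      ∑ j, |∑ k, a j k * (uR r (n k) * sgnB (ε k))| ^ r then (1:ℝ) else 0)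
      (fun n ε => by split_ifs <;> norm_num)]
    rw [Finset.sum_comm]
    set α : Fin N → ℝ := fun k => ∑ j, |a j k| ^ r with hα
    have hα0 : ∀ k, 0 ≤ α k := fun k => Finset.sum_nonneg fun j _ => by positivity
    set A := ∑ k, α k with hA
    have hA0 : 0 ≤ A := Finset.sum_nonneg fun k _ => hα0 k
    rcases hA0.eq_or_lt with h | h
    · have h3 : ∀ n : Fin N → ℕ, ∀ ε : Fin N → Bool,
        1 / 2 * A ≤ ∑ j, |∑ k, a j k * (uR r (n k) * sgnB (ε k))| ^ r := fun n ε => by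
        rw [← h, mul_zero]; positivity
      simp only [h3, if_true]
      have h4 : ((2:ℝ)^N)⁻¹ * ∑ _ε : Fin N → Bool, (1:ℝ) = 1 := by simp
      rw [h4, lintegral_const, measure_univ, mul_one]
      exact ENNReal.ofReal_le_ofReal (by linarith [Real.exp_pos (-(1/2))])
    · set Ev : Set (Fin N → ℕ) := {n | ∃ k, A ≤ 2 ^ (n k) * α k} with hEv
      have hc : P Evᶜ ≤ ENNReal.ofReal (Real.exp (-(1/2))) := by
        have : Evᶜ = Set.pi univ fun k => {n : ℕ | ¬ (A ≤ 2 ^ n * α k)} := by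
          ext n; simp [hEv]
        rw [this, hP, Measure.pi_pi]
        calc _ ≤ ∏ k, ENNReal.ofReal (Real.exp (-(α k / (2 * A)))) := by
              gcongr with k
              exact geo_tail (α k) A (hα0 k) h
                (Finset.single_le_sum (fun k _ => hα0 k) (Finset.mem_univ k))
          _ = ENNReal.ofReal (Real.exp (-(1/2))) := by
              rw [← ENNReal.ofReal_prod_of_nonneg fun k _ => (Real.exp_pos _).le, ← Real.exp_sum,
                Finset.sum_neg_distrib, ← Finset.sum_div, ← hA]
              congr 3; field_simp
      have hEvP : ENNReal.ofReal (1 - Real.exp (-(1/2))) ≤ P Ev := by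
        have h5 : P Ev + P Evᶜ = 1 := prob_add_prob_compl MeasurableSet.of_discrete
        rw [ENNReal.ofReal_sub _ (Real.exp_pos _).le, ENNReal.ofReal_one, ← h5]
        rw [tsub_le_iff_right]
        gcongr
      calc ENNReal.ofReal ((1/2) * (1 - Real.exp (-(1/2)))) ≤ ENNReal.ofReal (1/2) * P Ev := by
            rw [ENNReal.ofReal_mul (by norm_num)]; gcongr
        _ = ∫⁻ n, Ev.indicator (fun _ => ENNReal.ofReal (1/2)) n ∂P := by
            rw [lintegral_indicator MeasurableSet.of_discrete, setLIntegral_const]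
        _ ≤ _ := by
            refine lintegral_mono fun n => ?_
            by_cases hn : n ∈ Ev
            · rw [indicator_of_mem hn]
              refine ENNReal.ofReal_le_ofReal ?_
              obtain ⟨k0, hk0⟩ := hn
              have := flip_lower r hr N (fun j k => a j k * uR r (n k)) k0 A (by
                refine hk0.trans (le_of_eq ?_)
                simp only [hα]
                rw [Finset.mul_sum]
                refine Finset.sum_congr rfl fun j _ => ?_
                rw [abs_mul, Real.mul_rpow (abs_nonneg _) (abs_nonneg _),
                  abs_of_pos (uR_pos r _), uR_rpow r hr]; ring)
              simpa only [mul_assoc] using this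
            · rw [indicator_of_notMem hn]; exact zero_le

lemma wnorm_le_iff {Y : Type*} [MeasurableSpace Y] (ν : Measure Y) (g : Y → ℝ≥0∞) (p : ℝ)
    (R : ℝ≥0∞) : wnormAbs ν g p ≤ R ↔
      ∀ t : ℝ, 0 < t → ENNReal.ofReal t * (ν {y | ENNReal.ofReal t < g y}) ^ (1 / p) ≤ R := by
  unfold wnormAbs; exact iSup₂_le_iff

lemma memLq_iff {X : Type*} [MeasurableSpace X] (μ : Measure X) (f : X → ℝ) (q : ℝ) (hq : 0 < q) :
    MemLq μ f q ↔ Measurable f ∧ ∫⁻ x, ENNReal.ofReal (|f x| ^ q) ∂μ < ⊤ := by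
  unfold MemLq eLq
  rw [ENNReal.rpow_lt_top_iff_of_pos (by positivity)]

lemma MemLq.cmul {X : Type*} [MeasurableSpace X] {μ : Measure X} {f : X → ℝ} {q : ℝ} (hq : 0 < q)
    (hf : MemLq μ f q) (c : ℝ) : MemLq μ (fun x => c * f x) q := by
  rw [memLq_iff _ _ _ hq] at hf ⊢
  refine ⟨hf.1.const_mul c, ?_⟩
  have : ∀ x, ENNReal.ofReal (|c * f x| ^ q) = ENNReal.ofReal (|c| ^ q) *
      ENNReal.ofReal (|f x| ^ q) := fun x => by
    rw [abs_mul, Real.mul_rpow (abs_nonneg _) (abs_nonneg _), ENNReal.ofReal_mul (by positivity)]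
  simp_rw [this]
  rw [lintegral_const_mul' _ _ ENNReal.ofReal_ne_top]
  exact ENNReal.mul_lt_top ENNReal.ofReal_lt_top hf.2

lemma MemLq.add {X : Type*} [MeasurableSpace X] {μ : Measure X} {f g : X → ℝ} {q : ℝ} (hq : 0 < q)
    (hf : MemLq μ f q) (hg : MemLq μ g q) : MemLq μ (fun x => f x + g x) q := by
  rw [memLq_iff _ _ _ hq] at hf hg ⊢
  refine ⟨hf.1.add hg.1, ?_⟩
  have hpt : ∀ x, ENNReal.ofReal (|f x + g x| ^ q) ≤ ENNReal.ofReal (2 ^ q) *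
      (ENNReal.ofReal (|f x| ^ q) + ENNReal.ofReal (|g x| ^ q)) := fun x => by
    rw [← ENNReal.ofReal_add (by positivity) (by positivity), ← ENNReal.ofReal_mul (by positivity)]
    refine ENNReal.ofReal_le_ofReal ?_
    have h1 : |f x + g x| ≤ 2 * max |f x| |g x| := by
      have := abs_add_le (f x) (g x)
      have := le_max_left |f x| |g x|
      have := le_max_right |f x| |g x|
      linarith
    calc |f x + g x| ^ q ≤ (2 * max |f x| |g x|) ^ q := by gcongr
      _ = 2 ^ q * (max |f x| |g x|) ^ q := Real.mul_rpow (by norm_num) (by positivity)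
      _ ≤ _ := by
        gcongr
        have a1 : 0 ≤ |f x| ^ q := by positivity
        have a2 : 0 ≤ |g x| ^ q := by positivity
        rcases max_choice |f x| |g x| with h | h <;> rw [h] <;> linarith
  refine (lintegral_mono hpt).trans_lt ?_
  rw [lintegral_const_mul' _ _ ENNReal.ofReal_ne_top, lintegral_add_left]
  · exact ENNReal.mul_lt_top ENNReal.ofReal_lt_top (ENNReal.add_lt_top.2 ⟨hf.2, hg.2⟩)
  · exact ((hf.1.abs).pow_const q).ennreal_ofReal

lemma memLq_zero {X : Type*} [MeasurableSpace X] {μ : Measure X} {q : ℝ} (hq : 0 < q) :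
    MemLq μ (fun _ => (0:ℝ)) q := by
  rw [memLq_iff _ _ _ hq]
  simp [Real.zero_rpow hq.ne']

lemma memLq_sum {X : Type*} [MeasurableSpace X] {μ : Measure X} {q : ℝ} (hq : 0 < q) {ι : Type*}
    (s : Finset ι) (F : ι → X → ℝ) (hF : ∀ k, MemLq μ (F k) q) (g : ι → ℝ) :
    MemLq μ (fun x => ∑ k ∈ s, g k * F k x) q := by
  classical
  induction s using Finset.induction_on with
  | empty => simpa using memLq_zero hq
  | insert a s ha ih =>
    simp only [Finset.sum_insert ha]
    exact ((hF a).cmul hq (g a)).add hq ih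

lemma lin_sum {X Y : Type*} [MeasurableSpace X] [MeasurableSpace Y] {μ : Measure X} {ν : Measure Y}
    {q : ℝ} (hq : 0 < q) (T : (X → ℝ) → Y → ℝ)
    (hadd : ∀ g h, MemLq μ g q → MemLq μ h q →
      T (fun x => g x + h x) =ᵐ[ν] fun y => T g y + T h y)
    (hmul : ∀ (c : ℝ) g, MemLq μ g q → T (fun x => c * g x) =ᵐ[ν] fun y => c * T g y)
    {ι : Type*} (s : Finset ι) (F : ι → X → ℝ) (hF : ∀ k, MemLq μ (F k) q) (g : ι → ℝ) :
    T (fun x => ∑ k ∈ s, g k * F k x) =ᵐ[ν] fun y => ∑ k ∈ s, g k * T (F k) y := by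
  classical
  induction s using Finset.induction_on with
  | empty =>
    have := hmul 0 (fun _ => 0) (memLq_zero hq)
    simpa using this
  | insert a s ha ih =>
    simp only [Finset.sum_insert ha]
    filter_upwards [hadd _ _ ((hF a).cmul hq (g a)) (memLq_sum hq s F hF g), ih,
      hmul (g a) _ (hF a)] with y h1 h2 h3
    rw [h1, h2, h3]

lemma sum_rpow_ofReal {ι : Type*} (s : Finset ι) (x : ι → ℝ) (r : ℝ) :
    ∑ k ∈ s, ENNReal.ofReal (|x k| ^ r) = ENNReal.ofReal (∑ k ∈ s, |x k| ^ r) :=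
  (ENNReal.ofReal_sum_of_nonneg fun k _ => by positivity).symm

lemma lt_rpow_iff' (r : ℝ) (hr : 0 < r) (t S : ℝ) (ht : 0 ≤ t) :
    ENNReal.ofReal t < (ENNReal.ofReal S) ^ (1/r) ↔ t ^ r < S := by
  rw [one_div, ENNReal.lt_rpow_inv_iff hr, ENNReal.ofReal_rpow_of_nonneg ht hr.le,
    ENNReal.ofReal_lt_ofReal_iff']
  constructor
  · exact fun h => h.1
  · exact fun h => ⟨h, lt_of_le_of_lt (by positivity) h⟩

lemma markov_w {Ω : Type} (w φ : Ω → ℝ≥0∞) (V : ℝ≥0∞) (C δ : ℝ) (hC : 0 < C) (hδ : 0 < δ)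
    (h : ∑' ω, w ω * φ ω ≤ ENNReal.ofReal C * V) :
    ∑' ω, {ω | ENNReal.ofReal (2 * C / δ) * V < φ ω}.indicator w ω ≤ ENNReal.ofReal (δ / 2) := by
  have hpos : ENNReal.ofReal (2 * C / δ) ≠ 0 := by
    rw [Ne, ENNReal.ofReal_eq_zero, not_le]; positivity
  set L := ENNReal.ofReal (2 * C / δ) * V with hL
  have h1 : L * ∑' ω, {ω | L < φ ω}.indicator w ω ≤ ∑' ω, w ω * φ ω := by
    rw [← ENNReal.tsum_mul_left]
    refine ENNReal.tsum_le_tsum fun ω => ?_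
    by_cases hω : ω ∈ {ω | L < φ ω}
    · rw [indicator_of_mem hω, mul_comm]
      gcongr
      exact le_of_lt hω
    · rw [indicator_of_notMem hω, mul_zero]; exact zero_le
  have h2 : ENNReal.ofReal C * V = L * ENNReal.ofReal (δ / 2) := by
    rw [hL, mul_right_comm, ← ENNReal.ofReal_mul (by positivity)]
    congr 2; field_simp
  rcases eq_or_ne V 0 with hV | hV
  · have hL0 : L = 0 := by rw [hL, hV, mul_zero]
    rw [hV, mul_zero, nonpos_iff_eq_zero, ENNReal.tsum_eq_zero] at h
    refine le_trans (le_of_eq ?_) zero_le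
    rw [ENNReal.tsum_eq_zero]
    intro ω
    by_cases hω : ω ∈ {ω | L < φ ω}
    · rw [indicator_of_mem hω]
      have h3 : 0 < φ ω := by rw [← hL0]; exact hω
      exact (mul_eq_zero.1 (h ω)).resolve_right h3.ne'
    · rw [indicator_of_notMem hω]
  rcases eq_or_ne V ⊤ with hV' | hV'
  · have hL0 : L = ⊤ := by rw [hL, hV', ENNReal.mul_top hpos]
    refine le_trans (le_of_eq ?_) zero_le
    rw [ENNReal.tsum_eq_zero]
    intro ω
    rw [indicator_of_notMem]
    rw [hL0]
    simp
  · have hL0 : L ≠ 0 := mul_ne_zero hpos hV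
    have hLt : L ≠ ⊤ := ENNReal.mul_ne_top ENNReal.ofReal_ne_top hV'
    rw [h2] at h
    exact (ENNReal.mul_le_mul_iff_right hL0 hLt).1 (h1.trans h)

lemma one_var {X Y : Type*} [MeasurableSpace X] [MeasurableSpace Y]
    (p q r : ℝ) (hp : 0 < p) (hq : 0 < q) (hr : 0 < r) (hRV : RV r q) :
    ∃ C1 : ℝ≥0∞, 0 < C1 ∧ C1 < ⊤ ∧ ∀ (μ : Measure X) (ν : Measure Y)
      (J : Type) [Fintype J] (T : J → (X → ℝ) → Y → ℝ) (K : ℝ≥0∞),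
      (∀ j g h, MemLq μ g q → MemLq μ h q →
        T j (fun x => g x + h x) =ᵐ[ν] fun y => T j g y + T j h y) →
      (∀ j (c : ℝ) g, MemLq μ g q → T j (fun x => c * g x) =ᵐ[ν] fun y => c * T j g y) →
      (∀ f, MemLq μ f q →
        wnormAbs ν (fun y => (∑ j, ENNReal.ofReal (|T j f y| ^ r)) ^ (1/r)) p ≤ K * eLq μ f q) →
      ∀ (N : ℕ) (F : Fin N → X → ℝ), (∀ k, MemLq μ (F k) q) →
        wnormAbs ν (fun y => (∑ k, ∑ j, ENNReal.ofReal (|T j (F k) y| ^ r)) ^ (1/r)) p ≤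
          C1 * K * (∫⁻ x, (∑ k, ENNReal.ofReal (|F k x| ^ r)) ^ (q/r) ∂μ) ^ (1/q) := by
  obtain ⟨C, δ, c, hC, hδ, hc, hN⟩ := hRV
  refine ⟨ENNReal.ofReal (2/δ) ^ (1/p) * (ENNReal.ofReal (c ^ (1/r)))⁻¹ *
    ENNReal.ofReal (2 * C / δ) ^ (1/q), ?_, ?_, ?_⟩
  · refine ENNReal.mul_pos (mul_ne_zero ?_ ?_) ?_
    · exact (ENNReal.rpow_pos (by simp; positivity) ENNReal.ofReal_ne_top).ne'
    · simp
    · exact (ENNReal.rpow_pos (by simp; positivity) ENNReal.ofReal_ne_top).ne'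
  · refine ENNReal.mul_lt_top (ENNReal.mul_lt_top ?_ ?_) ?_
    · exact ENNReal.rpow_lt_top_of_nonneg (by positivity) ENNReal.ofReal_ne_top
    · simp; positivity
    · exact ENNReal.rpow_lt_top_of_nonneg (by positivity) ENNReal.ofReal_ne_top
  intro μ ν J _ T K hadd hmul hT N F hF
  obtain ⟨Ω, _, w, g, hw, hU, hL⟩ := hN N
  set V := ∫⁻ x, (∑ k, ENNReal.ofReal (|F k x| ^ r)) ^ (q/r) ∂μ with hV
  set f : Ω → X → ℝ := fun ω x => ∑ k, g ω k * F k x with hf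
  have hfm : ∀ ω, MemLq μ (f ω) q := fun ω => memLq_sum hq Finset.univ F hF (g ω)
  set φ : Ω → ℝ≥0∞ := fun ω => ∫⁻ x, ENNReal.ofReal (|f ω x| ^ q) ∂μ with hφ
  have hfmeas : ∀ ω, Measurable fun x => ENNReal.ofReal (|f ω x| ^ q) := fun ω =>
    (((hfm ω).1.abs).pow_const q).ennreal_ofReal
  have hmom : ∑' ω, w ω * φ ω ≤ ENNReal.ofReal C * V := by
    calc ∑' ω, w ω * φ ω = ∑' ω, ∫⁻ x, w ω * ENNReal.ofReal (|f ω x| ^ q) ∂μ :=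
          tsum_congr fun ω => (lintegral_const_mul _ (hfmeas ω)).symm
      _ = ∫⁻ x, ∑' ω, w ω * ENNReal.ofReal (|f ω x| ^ q) ∂μ :=
          (lintegral_tsum fun ω => ((hfmeas ω).const_mul _).aemeasurable).symm
      _ ≤ ∫⁻ x, ENNReal.ofReal C * (∑ k, ENNReal.ofReal (|F k x| ^ r)) ^ (q/r) ∂μ := by
          refine lintegral_mono fun x => ?_
          have := hU (fun k => F k x)
          simp only [mul_comm (F _ x)] at this
          refine this.trans (le_of_eq ?_)
          rw [ENNReal.ofReal_mul hC.le, sum_rpow_ofReal Finset.univ (fun k => F k x) r,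
            ENNReal.ofReal_rpow_of_nonneg (Finset.sum_nonneg fun k _ => by positivity)
              (by positivity)]
      _ = _ := lintegral_const_mul' _ _ ENNReal.ofReal_ne_top
  have hmk := markov_w w φ V C δ hC hδ hmom
  set L := ENNReal.ofReal (2 * C / δ) * V with hLdef
  set bad : Set Ω := {ω | L < φ ω} with hbad
  rw [wnorm_le_iff]
  intro t ht
  set t' := c ^ (1/r) * t with ht'
  have ht'0 : 0 < t' := by positivity
  set B : Ω → Set Y := fun ω =>
    {y | ENNReal.ofReal t' < (∑ j, ENNReal.ofReal (|T j (f ω) y| ^ r)) ^ (1/r)} with hB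
  set M : ℝ≥0∞ := (K * L ^ (1/q) / ENNReal.ofReal t') ^ p with hM
  have ht'ne : ENNReal.ofReal t' ≠ 0 := by simp; exact ht'0
  have hBM : ∀ ω, ω ∉ bad → ν (B ω) ≤ M := by
    intro ω hω
    have h1 := (wnorm_le_iff _ _ _ _).1 (hT (f ω) (hfm ω)) t' ht'0
    have h2 : K * eLq μ (f ω) q ≤ K * L ^ (1/q) := by
      unfold eLq
      gcongr
      simpa [hbad] using hω
    have h3 : ν (B ω) ^ (1/p) ≤ K * L ^ (1/q) / ENNReal.ofReal t' := by
      rw [ENNReal.le_div_iff_mul_le (Or.inl ht'ne) (Or.inl ENNReal.ofReal_ne_top), mul_comm]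
      exact h1.trans h2
    rw [hM]
    rw [one_div] at h3
    exact (ENNReal.rpow_inv_le_iff hp).1 h3
  set H : Ω → Set Y := fun ω => toMeasurable ν (B ω) with hH
  set W : Y → ℝ≥0∞ := fun y => ∑' ω, badᶜ.indicator w ω * (H ω).indicator 1 y with hW
  have hWm : Measurable W := Measurable.tsum fun ω =>
    (measurable_one.indicator (measurableSet_toMeasurable _ _)).const_mul _
  have hae : ∀ᵐ y ∂ν, ∀ ω j, T j (f ω) y = ∑ k, g ω k * T j (F k) y := by
    rw [ae_all_iff]; intro ω
    rw [ae_all_iff]; intro j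
    exact lin_sum hq (T j) (hadd j) (hmul j) Finset.univ F hF (g ω)
  set A : Set Y := {y | ENNReal.ofReal t <
    (∑ k, ∑ j, ENNReal.ofReal (|T j (F k) y| ^ r)) ^ (1/r)} with hA
  have hAsub : ν A ≤ ν {y | ENNReal.ofReal (δ/2) ≤ W y} := by
    refine measure_mono_ae ?_
    filter_upwards [hae] with y hy hyA
    change ENNReal.ofReal (δ/2) ≤ W y
    have hyA' : t ^ r < ∑ j, ∑ k, |T j (F k) y| ^ r := by
      have h1 : ENNReal.ofReal t <
        (∑ k, ∑ j, ENNReal.ofReal (|T j (F k) y| ^ r)) ^ (1/r) := hyA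
      simp_rw [sum_rpow_ofReal] at h1
      rw [← ENNReal.ofReal_sum_of_nonneg (fun k _ => Finset.sum_nonneg fun j _ => by positivity),
        lt_rpow_iff' r hr t _ ht.le] at h1
      rwa [Finset.sum_comm]
    have h2 := hL J (fun j k => T j (F k) y)
    have h3 : ∀ ω, w ω * (if c * ∑ j, ∑ k, |T j (F k) y| ^ r ≤
        ∑ j, |∑ k, T j (F k) y * g ω k| ^ r then 1 else 0) ≤
        badᶜ.indicator w ω * (H ω).indicator 1 y + bad.indicator w ω := by
      intro ω
      by_cases hω : ω ∈ bad
      · rw [indicator_of_mem hω]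
        refine le_trans ?_ le_add_self
        split_ifs <;> simp
      · have hω' : ω ∈ badᶜ := hω
        rw [indicator_of_mem hω', indicator_of_notMem hω, add_zero]
        gcongr
        split_ifs with hcond
        · have hyB : y ∈ B ω := by
            change ENNReal.ofReal t' < (∑ j, ENNReal.ofReal (|T j (f ω) y| ^ r)) ^ (1/r)
            rw [sum_rpow_ofReal, lt_rpow_iff' r hr t' _ ht'0.le]
            simp only [hy ω]
            simp only [mul_comm (g ω _)]
            refine lt_of_lt_of_le ?_ hcond
            rw [ht', Real.mul_rpow (by positivity) ht.le, ← Real.rpow_mul hc.le,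
              one_div_mul_cancel hr.ne', Real.rpow_one]
            gcongr
          rw [indicator_of_mem (subset_toMeasurable _ _ hyB)]
          simp
        · exact zero_le
    have h4 : ENNReal.ofReal δ ≤ W y + ENNReal.ofReal (δ/2) := by
      refine h2.trans ((ENNReal.tsum_le_tsum h3).trans ?_)
      rw [ENNReal.tsum_add]
      gcongr
    have h5 : ENNReal.ofReal δ = ENNReal.ofReal (δ/2) + ENNReal.ofReal (δ/2) := by
      rw [← ENNReal.ofReal_add (by positivity) (by positivity)]; congr 1; ring
    rw [h5] at h4
    exact (ENNReal.add_le_add_iff_right ENNReal.ofReal_ne_top).1 h4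
  have hWint : ∫⁻ y, W y ∂ν ≤ M := by
    rw [hW, lintegral_tsum fun ω =>
      ((measurable_one.indicator (measurableSet_toMeasurable _ _)).const_mul _).aemeasurable]
    calc _ = ∑' ω, badᶜ.indicator w ω * ν (B ω) := by
          refine tsum_congr fun ω => ?_
          rw [lintegral_const_mul _ (measurable_one.indicator (measurableSet_toMeasurable _ _)),
            lintegral_indicator_one (measurableSet_toMeasurable _ _), measure_toMeasurable]
      _ ≤ ∑' ω, w ω * M := by
          refine ENNReal.tsum_le_tsum fun ω => ?_
          by_cases hω : ω ∈ bad
          · have : ω ∉ badᶜ := fun h => h hω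
            rw [indicator_of_notMem this, zero_mul]; exact zero_le
          · have hω' : ω ∈ badᶜ := hω
            rw [indicator_of_mem hω']
            gcongr
            exact hBM ω hω
      _ ≤ M := by
          rw [ENNReal.tsum_mul_right]
          calc _ ≤ 1 * M := by gcongr
            _ = M := one_mul M
  have hνA : ν A ≤ ENNReal.ofReal (2/δ) * M := by
    have h1 := (mul_meas_ge_le_lintegral hWm (ENNReal.ofReal (δ/2)) (μ := ν)).trans hWint
    have h2 : ENNReal.ofReal (2/δ) * ENNReal.ofReal (δ/2) = 1 := by
      rw [← ENNReal.ofReal_mul (by positivity), ← ENNReal.ofReal_one]; congr 1; field_simp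
    calc ν A ≤ ν {y | ENNReal.ofReal (δ/2) ≤ W y} := hAsub
      _ = ENNReal.ofReal (2/δ) * (ENNReal.ofReal (δ/2) * ν {y | ENNReal.ofReal (δ/2) ≤ W y}) := by
          rw [← mul_assoc, h2, one_mul]
      _ ≤ _ := by gcongr
  calc ENNReal.ofReal t * ν A ^ (1/p) ≤ ENNReal.ofReal t * (ENNReal.ofReal (2/δ) * M) ^ (1/p) := by
        gcongr
    _ = ENNReal.ofReal t * (ENNReal.ofReal (2/δ) ^ (1/p) *
          (K * L ^ (1/q) / ENNReal.ofReal t')) := by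
        rw [ENNReal.mul_rpow_of_nonneg _ _ (by positivity), hM, one_div, ENNReal.rpow_rpow_inv hp.ne']
    _ = _ := by
        rw [ht', ENNReal.ofReal_mul (by positivity), hLdef,
          ENNReal.mul_rpow_of_nonneg _ _ (by positivity), div_eq_mul_inv (K * _),
          ENNReal.mul_inv (Or.inr ENNReal.ofReal_ne_top) (Or.inl ENNReal.ofReal_ne_top)]
        have h1 : ENNReal.ofReal t * (ENNReal.ofReal t)⁻¹ = 1 :=
          ENNReal.mul_inv_cancel (by simp; exact ht) ENNReal.ofReal_ne_top
        calc _ = (ENNReal.ofReal t * (ENNReal.ofReal t)⁻¹) * (ENNReal.ofReal (2/δ) ^ (1/p) *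
              (ENNReal.ofReal (c ^ (1/r)))⁻¹ * ENNReal.ofReal (2 * C / δ) ^ (1/q) * K *
              V ^ (1/q)) := by ring
          _ = _ := by rw [h1, one_mul]

lemma wnorm_iSup {Y ι : Type*} [MeasurableSpace Y] [Countable ι] (ν : Measure Y)
    (φ : ι → Y → ℝ≥0∞) (p r : ℝ) (hp : 0 < p) (hr : 0 < r) (R : ℝ≥0∞)
    (h : ∀ s : Finset ι, wnormAbs ν (fun y => (∑ k ∈ s, φ k y) ^ (1/r)) p ≤ R) :
    wnormAbs ν (fun y => (∑' k, φ k y) ^ (1/r)) p ≤ R := by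
  rw [wnorm_le_iff]
  intro t ht
  have ht0 : ENNReal.ofReal t ≠ 0 := by simp; exact ht
  have hset : {y | ENNReal.ofReal t < (∑' k, φ k y) ^ (1/r)} =
      ⋃ s : Finset ι, {y | ENNReal.ofReal t < (∑ k ∈ s, φ k y) ^ (1/r)} := by
    ext y
    simp only [mem_ofPred_eq, mem_iUnion, one_div, ENNReal.lt_rpow_inv_iff hr]
    rw [ENNReal.tsum_eq_iSup_sum, lt_iSup_iff]
  have hb : ∀ s : Finset ι, ν {y | ENNReal.ofReal t < (∑ k ∈ s, φ k y) ^ (1/r)} ≤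
      (R / ENNReal.ofReal t) ^ p := by
    intro s
    have h1 := (wnorm_le_iff _ _ _ _).1 (h s) t ht
    rw [mul_comm, ← ENNReal.le_div_iff_mul_le (Or.inl ht0) (Or.inl ENNReal.ofReal_ne_top),
      one_div p, ENNReal.rpow_inv_le_iff hp] at h1
    exact h1
  have hdir : Directed (· ⊆ ·) fun s : Finset ι =>
      {y | ENNReal.ofReal t < (∑ k ∈ s, φ k y) ^ (1/r)} := by
    classical
    have hmono : Monotone fun s : Finset ι =>
        {y | ENNReal.ofReal t < (∑ k ∈ s, φ k y) ^ (1/r)} := by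
      intro s s' hss y hy
      have hy' : ENNReal.ofReal t < (∑ k ∈ s, φ k y) ^ (1/r) := hy
      change ENNReal.ofReal t < (∑ k ∈ s', φ k y) ^ (1/r)
      refine hy'.trans_le ?_
      gcongr
    exact hmono.directed_le
  rw [hset, hdir.measure_iUnion, mul_comm,
    ← ENNReal.le_div_iff_mul_le (Or.inl ht0) (Or.inl ENNReal.ofReal_ne_top), one_div p,
    ENNReal.rpow_inv_le_iff hp]
  exact iSup_le hb

/-- index boxes -/
def boxD {m : ℕ} (s : Finset (Fin m)) (N : ℕ) : Finset (Fin m → ℕ) :=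
  Fintype.piFinset fun i => if i ∈ s then Finset.range N else {0}

lemma box_insert {m : ℕ} (s : Finset (Fin m)) (N : ℕ) (a : Fin m) (ha : a ∉ s)
    (φ : (Fin m → ℕ) → ℝ≥0∞) :
    ∑ k ∈ boxD (insert a s) N, φ k =
      ∑ n : Fin N, ∑ k : boxD s N, φ (Function.update k.1 a n) := by
  rw [← Finset.sum_range (fun n => ∑ k : boxD s N, φ (Function.update k.1 a n))]
  have : ∀ n, ∑ k : boxD s N, φ (Function.update k.1 a n) =
      ∑ k ∈ boxD s N, φ (Function.update k a n) := fun n =>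
    Finset.sum_coe_sort (boxD s N) (fun k => φ (Function.update k a n))
  simp_rw [this]
  rw [← Finset.sum_product']
  refine Finset.sum_nbij' (fun k => (k a, Function.update k a 0))
    (fun x => Function.update x.2 a x.1) ?_ ?_ ?_ ?_ ?_
  · intro k hk
    simp only [boxD, Fintype.mem_piFinset, Finset.mem_product] at hk ⊢
    refine ⟨by simpa using hk a, fun i => ?_⟩
    by_cases hi : i = a
    · subst hi; simp [ha]
    · simpa [hi] using hk i
  · rintro ⟨n, k⟩ hk
    simp only [boxD, Fintype.mem_piFinset, Finset.mem_product] at hk ⊢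
    intro i
    by_cases hi : i = a
    · subst hi; simpa using hk.1
    · simpa [hi] using hk.2 i
  · intro k hk; simp
  · rintro ⟨n, k⟩ hk
    simp only [boxD, Fintype.mem_piFinset, Finset.mem_product] at hk
    have := hk.2 a
    simp only [ha, if_false, Finset.mem_singleton] at this
    simp [← this]
  · intro k hk; simp

lemma multi_step {m : ℕ} (X : Fin m → Type*) [∀ i, MeasurableSpace (X i)]
    (Y : Type*) [MeasurableSpace Y]
    (p r : ℝ) (q : Fin m → ℝ) (hr0 : 0 < r) (c : Fin m → ℝ≥0∞)
    (hC : ∀ i, ∀ (μ : Measure (X i)) (ν : Measure Y)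
      (J : Type) [Fintype J] (T : J → (X i → ℝ) → Y → ℝ) (K : ℝ≥0∞),
      (∀ j g h, MemLq μ g (q i) → MemLq μ h (q i) →
        T j (fun x => g x + h x) =ᵐ[ν] fun y => T j g y + T j h y) →
      (∀ j (c : ℝ) g, MemLq μ g (q i) → T j (fun x => c * g x) =ᵐ[ν] fun y => c * T j g y) →
      (∀ f, MemLq μ f (q i) →
        wnormAbs ν (fun y => (∑ j, ENNReal.ofReal (|T j f y| ^ r)) ^ (1/r)) p
          ≤ K * eLq μ f (q i)) →
      ∀ (N : ℕ) (F : Fin N → X i → ℝ), (∀ k, MemLq μ (F k) (q i)) →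
        wnormAbs ν (fun y => (∑ k, ∑ j, ENNReal.ofReal (|T j (F k) y| ^ r)) ^ (1/r)) p ≤
          c i * K * (∫⁻ x, (∑ k, ENNReal.ofReal (|F k x| ^ r)) ^ (q i/r) ∂μ) ^ (1/q i))
    (μ : ∀ i, Measure (X i)) (ν : Measure Y)
    (S : ((i : Fin m) → (X i → ℝ)) → Y → ℝ) (K : ℝ≥0∞)
    (hadd : ∀ (i : Fin m) (f : (j : Fin m) → X j → ℝ) (g h : X i → ℝ),
              (∀ j, MemLq (μ j) (f j) (q j)) → MemLq (μ i) g (q i) → MemLq (μ i) h (q i) →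
              S (Function.update f i (fun x => g x + h x)) =ᵐ[ν]
                fun y => S (Function.update f i g) y + S (Function.update f i h) y)
    (hmul : ∀ (i : Fin m) (f : (j : Fin m) → X j → ℝ) (c : ℝ) (g : X i → ℝ),
              (∀ j, MemLq (μ j) (f j) (q j)) → MemLq (μ i) g (q i) →
              S (Function.update f i (fun x => c * g x)) =ᵐ[ν]
                fun y => c * S (Function.update f i g) y)
    (hS : ∀ f : (i : Fin m) → X i → ℝ, (∀ i, MemLq (μ i) (f i) (q i)) →
              wnormAbs ν (fun y => ENNReal.ofReal |S f y|) p
                ≤ K * ∏ i, eLq (μ i) (f i) (q i))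
    (N : ℕ) (s : Finset (Fin m)) :
    ∀ F : (i : Fin m) → ℕ → X i → ℝ, (∀ i k, MemLq (μ i) (F i k) (q i)) →
      wnormAbs ν (fun y => (∑ k ∈ boxD s N,
          ENNReal.ofReal (|S (fun i => F i (k i)) y| ^ r)) ^ (1 / r)) p
        ≤ (∏ i ∈ s, c i) * K * ∏ i, (if i ∈ s then
            (∫⁻ x, (∑ k ∈ Finset.range N, ENNReal.ofReal (|F i k x| ^ r)) ^ (q i / r)
              ∂(μ i)) ^ (1 / q i) else eLq (μ i) (F i 0) (q i)) := by
  induction s using Finset.induction_on with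
  | empty =>
    intro F hF
    have hbox : boxD (∅ : Finset (Fin m)) N = {fun _ => 0} := by
      ext k; simp [boxD, funext_iff]
    have h1 : ∀ x : ℝ, (ENNReal.ofReal (|x| ^ r)) ^ (1/r) = ENNReal.ofReal |x| := fun x => by
      rw [ENNReal.ofReal_rpow_of_nonneg (by positivity) (by positivity), one_div,
        Real.rpow_rpow_inv (abs_nonneg _) hr0.ne']
    simp only [hbox, Finset.sum_singleton, h1, Finset.prod_empty, one_mul, Finset.notMem_empty,
      if_false]
    exact hS _ fun i => hF i 0
  | insert a s ha ih =>
    intro F hF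
    set R : Fin m → ℝ≥0∞ := fun i => (if i ∈ s then
            (∫⁻ x, (∑ k ∈ Finset.range N, ENNReal.ofReal (|F i k x| ^ r)) ^ (q i / r)
              ∂(μ i)) ^ (1 / q i) else eLq (μ i) (F i 0) (q i)) with hR
    have key := hC a (μ a) ν (boxD s N)
      (fun k f => S (Function.update (fun i => F i (k.1 i)) a f))
      ((∏ i ∈ s, c i) * K * ∏ i ∈ Finset.univ.erase a, R i)
      (fun k g h hg hh => hadd a _ g h (fun j => hF j _) hg hh)
      (fun k c g hg => hmul a _ c g (fun j => hF j _) hg)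
      (fun f hf => by
        have h1 := ih (Function.update F a (fun _ => f)) (by
          intro i k
          by_cases hi : i = a
          · subst hi; simpa using hf
          · simpa [hi] using hF i k)
        have h2 : ∀ k : Fin m → ℕ, (fun i => Function.update F a (fun _ => f) i (k i)) =
            Function.update (fun i => F i (k i)) a f := by
          intro k; funext i
          by_cases hi : i = a
          · subst hi; simp
          · simp [hi]
        simp only [h2] at h1
        have h5 : ∀ y, ∑ k : boxD s N, ENNReal.ofReal
              (|S (Function.update (fun i => F i (k.1 i)) a f) y| ^ r) =
            ∑ k ∈ boxD s N, ENNReal.ofReal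
              (|S (Function.update (fun i => F i (k i)) a f) y| ^ r) := fun y =>
          Finset.sum_coe_sort (boxD s N) (fun k => ENNReal.ofReal
            (|S (Function.update (fun i => F i (k i)) a f) y| ^ r))
        simp only [h5]
        refine h1.trans (le_of_eq ?_)
        rw [← Finset.mul_prod_erase _ _ (Finset.mem_univ a)]
        have h3 : ∏ i ∈ Finset.univ.erase a, (if i ∈ s then
            (∫⁻ x, (∑ k ∈ Finset.range N, ENNReal.ofReal
              (|Function.update F a (fun _ => f) i k x| ^ r)) ^ (q i / r)
              ∂(μ i)) ^ (1 / q i) else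
              eLq (μ i) (Function.update F a (fun _ => f) i 0) (q i)) =
            ∏ i ∈ Finset.univ.erase a, R i := by
          refine Finset.prod_congr rfl fun i hi => ?_
          have hi' : i ≠ a := Finset.ne_of_mem_erase hi
          simp [hR, hi']
        rw [h3]
        simp only [ha, if_false, Function.update_self]
        ring)
      N (fun n => F a n) (fun n => hF a n)
    simp only [box_insert s N a ha]
    have h4 : ∀ (n : Fin N) (k : boxD s N),
        (fun i => F i (Function.update k.1 a (n : ℕ) i)) =
          Function.update (fun i => F i (k.1 i)) a (F a n) := by
      intro n k; funext i
      by_cases hi : i = a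
      · subst hi; simp
      · simp [hi]
    simp only [h4]
    refine key.trans (le_of_eq ?_)
    rw [← Finset.mul_prod_erase Finset.univ _ (Finset.mem_univ a), Finset.prod_insert ha]
    have h3 : ∏ i ∈ Finset.univ.erase a, (if i ∈ insert a s then
            (∫⁻ x, (∑ k ∈ Finset.range N, ENNReal.ofReal
              (|F i k x| ^ r)) ^ (q i / r)
              ∂(μ i)) ^ (1 / q i) else eLq (μ i) (F i 0) (q i)) =
            ∏ i ∈ Finset.univ.erase a, R i := by
      refine Finset.prod_congr rfl fun i hi => ?_
      have hi' : i ≠ a := Finset.ne_of_mem_erase hi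
      simp [hR, hi']
    rw [h3]
    simp only [Finset.mem_insert_self, if_true]
    have h5 : ∀ x, ∑ k ∈ Finset.range N, ENNReal.ofReal (|F a k x| ^ r) =
        ∑ k : Fin N, ENNReal.ofReal (|F a k x| ^ r) := fun x => Finset.sum_range _
    simp only [h5]
    ring

/-- **Marcinkiewicz–Zygmund inequality for multilinear operators
(Carando–Mazzitelli–Ombrosi).**  If `S` is `m`-linear and bounded from
`L^{q₁}(μ₁) × ⋯ × L^{q_m}(μ_m)` into `L^{p,∞}(ν)` with constant `K = ‖S‖_weak`, and
either `0 < p, qᵢ < r < 2` or `r = 2` (with `0 < p, qᵢ < ∞`), then there is a constant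
`C`, depending only on `p, q₁, …, q_m, r, m`, such that for all countable families
`{f^i_k}_k ⊂ L^{qᵢ}(μᵢ)`,
`‖(∑_{k⃗} |S(f¹_{k₁},…,f^m_{k_m})|^r)^{1/r}‖_{L^{p,∞}(ν)}
  ≤ C K ∏ᵢ ‖(∑_k |f^i_k|^r)^{1/r}‖_{L^{qᵢ}(μᵢ)}`. -/
theorem MZ_multilinear {m : ℕ} (hm : 0 < m)
    (X : Fin m → Type*) [∀ i, MeasurableSpace (X i)]
    (Y : Type*) [MeasurableSpace Y]
    (p r : ℝ) (q : Fin m → ℝ)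
    (hp : 0 < p) (hq : ∀ i, 0 < q i) (hr0 : 0 < r)
    (hr : (p < r ∧ (∀ i, q i < r) ∧ r < 2) ∨ r = 2) :
    ∃ C : ℝ≥0∞, 0 < C ∧ C < ⊤ ∧
      ∀ (μ : ∀ i, Measure (X i)) (ν : Measure Y),
        (∀ i, SigmaFinite (μ i)) → SigmaFinite ν →
        ∀ (S : ((i : Fin m) → (X i → ℝ)) → Y → ℝ) (K : ℝ≥0∞),
          -- additivity in each variable
          (∀ (i : Fin m) (f : (j : Fin m) → X j → ℝ) (g h : X i → ℝ),
              (∀ j, MemLq (μ j) (f j) (q j)) → MemLq (μ i) g (q i) → MemLq (μ i) h (q i) →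
              S (Function.update f i (fun x => g x + h x)) =ᵐ[ν]
                fun y => S (Function.update f i g) y + S (Function.update f i h) y) →
          -- homogeneity in each variable
          (∀ (i : Fin m) (f : (j : Fin m) → X j → ℝ) (c : ℝ) (g : X i → ℝ),
              (∀ j, MemLq (μ j) (f j) (q j)) → MemLq (μ i) g (q i) →
              S (Function.update f i (fun x => c * g x)) =ᵐ[ν]
                fun y => c * S (Function.update f i g) y) →
          -- weak-type boundedness with constant `K = ‖S‖_weak`
          (∀ f : (i : Fin m) → X i → ℝ, (∀ i, MemLq (μ i) (f i) (q i)) →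
              wnormAbs ν (fun y => ENNReal.ofReal |S f y|) p
                ≤ K * ∏ i, eLq (μ i) (f i) (q i)) →
          ∀ F : (i : Fin m) → ℕ → X i → ℝ,
            (∀ i k, MemLq (μ i) (F i k) (q i)) →
            wnormAbs ν (fun y => (∑' k : Fin m → ℕ,
                ENNReal.ofReal (|S (fun i => F i (k i)) y| ^ r)) ^ (1 / r)) p
              ≤ C * K * ∏ i,
                  (∫⁻ x, (∑' k : ℕ, ENNReal.ofReal (|F i k x| ^ r)) ^ (q i / r)
                    ∂(μ i)) ^ (1 / q i) := by
  have hRV : ∀ i, RV r (q i) := by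
    intro i
    rcases hr with ⟨_, h2, h3⟩ | h
    · exact RV_lt r (q i) (hq i) (h2 i) h3
    · rw [h]; exact RV_two (q i) (hq i)
  choose c hc0 hct hC using fun i =>
    one_var (X := X i) (Y := Y) p (q i) r hp (hq i) hr0 (hRV i)
  refine ⟨∏ i, c i, ?_, ?_, ?_⟩
  · exact pos_iff_ne_zero.2 (Finset.prod_ne_zero_iff.2 fun i _ => (hc0 i).ne')
  · exact ENNReal.prod_lt_top fun i _ => hct i
  intro μ ν _ _ S K hadd hmul hS F hF
  refine wnorm_iSup ν (fun (k : Fin m → ℕ) y =>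
    ENNReal.ofReal (|S (fun i => F i (k i)) y| ^ r)) p r hp hr0 _ fun s => ?_
  obtain ⟨N, hN⟩ : ∃ N, s ⊆ boxD Finset.univ N := by
    refine ⟨(s.sup fun k => Finset.univ.sup k) + 1, fun k hk => ?_⟩
    simp only [boxD, Fintype.mem_piFinset, Finset.mem_univ, if_true, Finset.mem_range]
    intro i
    have h1 : k i ≤ Finset.univ.sup k := Finset.le_sup (Finset.mem_univ i)
    have h2 : Finset.univ.sup k ≤ s.sup fun k => Finset.univ.sup k :=
      Finset.le_sup (f := fun k : Fin m → ℕ => Finset.univ.sup k) hk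
    omega
  have key := multi_step X Y p r q hr0 c (fun i => hC i) μ ν S K hadd hmul hS N Finset.univ F hF
  simp only [Finset.mem_univ, if_true] at key
  have hmono : wnormAbs ν (fun y => (∑ k ∈ s,
      ENNReal.ofReal (|S (fun i => F i (k i)) y| ^ r)) ^ (1 / r)) p ≤
      wnormAbs ν (fun y => (∑ k ∈ boxD Finset.univ N,
      ENNReal.ofReal (|S (fun i => F i (k i)) y| ^ r)) ^ (1 / r)) p := by
    unfold wnormAbs
    refine iSup₂_mono fun t _ => ?_
    gcongr with y
    dsimp only
    exact ENNReal.rpow_le_rpow (Finset.sum_le_sum_of_subset hN) (by positivity)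
  refine hmono.trans (key.trans ?_)
  gcongr with i _ x
  · exact div_nonneg zero_le_one (hq i).le
  · exact div_nonneg (hq i).le hr0.le
  · exact ENNReal.sum_le_tsum _

end
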